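/- arXiv:1211.6499 — 6 statements merged into one kernel-verified Lean document; each statement's English description precedes it below -/
import Mathlib

section
/- Coupled identity for J₁, J₂ (proof of Theorem 3.1): Let λ₁ = λ₂ = λ > 0 and let (u,v) be a radial classical solution as in the context. Define J₁(r,t) = u_r(r,t) − (r/R)e^{v(r,t)} and J₂(r,t) = v_r(r,t) − (r/R)e^{u(r,t)}. Then for all 0 < r < R and 0 < t < T: J₁ₜ − J₁ᵣᵣ − ((n−1)/r)J₁ᵣ + ((n−1)/r²)J₁ − λ e^{v} J₂ = (r/R) e^{v} v_r² + (2/R) e^{v} v_r. In particular, if v_r ≥ 0 then the left-hand side is nonnegative. -/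
/-!
Everything happens at interior points, where `dr R` is the ordinary derivative
(`dr_eq_deriv`, `dr_dr_eq_deriv`). Differentiating the equation for `u` in `r` and exchanging the
`r`- and `t`-derivatives (`deriv_deriv_swap`, from symmetry of the second Fréchet derivative) gives
`u_rt = u_rrr + ((n-1)/r) u_rr - ((n-1)/r²) u_r + λ e^v v_r`. Substituting this together with the
equation for `v` into the explicit expressions for `J₁ₜ`, `J₁ᵣ`, `J₁ᵣᵣ` leaves an algebraic
identity, in which the terms in `u_rrr`, `u_rr`, `u_r` and `v_rr` cancel. The right-hand side is
visibly nonnegative when `v_r ≥ 0`.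
-/

open Set Real Filter Topology

/-- One-sided spatial derivative on the interval `[0,R]` (agrees with the usual
derivative at interior points). -/
noncomputable def dr (R : ℝ) (f : ℝ → ℝ) (r : ℝ) : ℝ :=
  derivWithin f (Set.Icc 0 R) r

/-- A radial classical solution of problem (1.1), written in radial coordinates:
`u, v : [0,R] × (0,T) → ℝ`, of class C² in `r` and C¹ in `t`, satisfying
`u_t = u_rr + ((n−1)/r) u_r + λ₁ e^v`, `v_t = v_rr + ((n−1)/r) v_r + λ₂ e^u` for
`0 < r < R`, `0 < t < T`, with boundary conditions `u_r(R,t) = e^{v(R,t)}`,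
`v_r(R,t) = e^{u(R,t)}`. -/
structure IsRadialSolution (n : ℕ) (R T lam1 lam2 : ℝ) (u v : ℝ → ℝ → ℝ) : Prop where
  reg_r_u : ∀ t ∈ Ioo (0 : ℝ) T, ContDiffOn ℝ 2 (fun r => u r t) (Icc (0 : ℝ) R)
  reg_r_v : ∀ t ∈ Ioo (0 : ℝ) T, ContDiffOn ℝ 2 (fun r => v r t) (Icc (0 : ℝ) R)
  reg_t_u : ∀ r ∈ Icc (0 : ℝ) R, ∀ t ∈ Ioo (0 : ℝ) T, DifferentiableAt ℝ (u r) t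
  reg_t_v : ∀ r ∈ Icc (0 : ℝ) R, ∀ t ∈ Ioo (0 : ℝ) T, DifferentiableAt ℝ (v r) t
  pde_u : ∀ r ∈ Ioo (0 : ℝ) R, ∀ t ∈ Ioo (0 : ℝ) T,
    deriv (u r) t = dr R (dr R (fun s => u s t)) r
      + ((n - 1 : ℝ) / r) * dr R (fun s => u s t) r + lam1 * Real.exp (v r t)
  pde_v : ∀ r ∈ Ioo (0 : ℝ) R, ∀ t ∈ Ioo (0 : ℝ) T,
    deriv (v r) t = dr R (dr R (fun s => v s t)) r
      + ((n - 1 : ℝ) / r) * dr R (fun s => v s t) r + lam2 * Real.exp (u r t)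
  bc_u : ∀ t ∈ Ioo (0 : ℝ) T, dr R (fun s => u s t) R = Real.exp (v R t)
  bc_v : ∀ t ∈ Ioo (0 : ℝ) T, dr R (fun s => v s t) R = Real.exp (u R t)

/-- `J₁(r,t) = u_r(r,t) − (r/R) e^{v(r,t)}` from the proof of Theorem 3.1. -/
noncomputable def J1fun (u v : ℝ → ℝ → ℝ) (R : ℝ) (r t : ℝ) : ℝ :=
  dr R (fun s => u s t) r - (r / R) * Real.exp (v r t)

/-- `J₂(r,t) = v_r(r,t) − (r/R) e^{u(r,t)}` from the proof of Theorem 3.1. -/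
noncomputable def J2fun (u v : ℝ → ℝ → ℝ) (R : ℝ) (r t : ℝ) : ℝ :=
  dr R (fun s => v s t) r - (r / R) * Real.exp (u r t)

theorem dr_eq_deriv {R r : ℝ} (f : ℝ → ℝ) (hr : r ∈ Ioo (0 : ℝ) R) : dr R f r = deriv f r :=
  derivWithin_of_mem_nhds (Icc_mem_nhds hr.1 hr.2)

theorem dr_dr_eq_deriv {R r : ℝ} (f : ℝ → ℝ) (hr : r ∈ Ioo (0 : ℝ) R) :
    dr R (dr R f) r = deriv (deriv f) r := by
  rw [dr_eq_deriv _ hr]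
  apply Filter.EventuallyEq.deriv_eq
  filter_upwards [Ioo_mem_nhds hr.1 hr.2] with s hs using dr_eq_deriv f hs

theorem hasDerivAt_left {F : ℝ × ℝ → ℝ} {r t : ℝ} (h : DifferentiableAt ℝ F (r, t)) :
    HasDerivAt (fun s => F (s, t)) (fderiv ℝ F (r, t) (1, 0)) r :=
  h.hasFDerivAt.comp_hasDerivAt (f := fun s : ℝ => (s, t)) r
    ((hasDerivAt_id r).prodMk (hasDerivAt_const r t))

theorem hasDerivAt_right {F : ℝ × ℝ → ℝ} {r t : ℝ} (h : DifferentiableAt ℝ F (r, t)) :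
    HasDerivAt (fun τ => F (r, τ)) (fderiv ℝ F (r, t) (0, 1)) t :=
  h.hasFDerivAt.comp_hasDerivAt (f := fun τ : ℝ => (r, τ)) t
    ((hasDerivAt_const t r).prodMk (hasDerivAt_id t))

/-- Equality of mixed partial derivatives, together with the existence of the mixed derivative
`∂ₜ∂ᵣu`, for a function that is `C²` near `(r, t)`. -/
theorem deriv_deriv_swap {u : ℝ → ℝ → ℝ} {r t : ℝ}
    (h : ContDiffAt ℝ 2 (fun p : ℝ × ℝ => u p.1 p.2) (r, t)) :
    HasDerivAt (fun τ => deriv (fun s => u s τ) r) (deriv (fun s => deriv (u s) t) r) t := by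
  set F : ℝ × ℝ → ℝ := fun p => u p.1 p.2 with hF
  have hd : ∀ᶠ p in 𝓝 (r, t), DifferentiableAt ℝ F p := by
    filter_upwards [h.eventually (by simp)] with p hp using hp.differentiableAt (by simp)
  have hF' : DifferentiableAt ℝ (fderiv ℝ F) (r, t) :=
    (h.fderiv_right (m := 1) (by norm_num)).differentiableAt (by simp)
  have hsymm : IsSymmSndFDerivAt ℝ F (r, t) := h.isSymmSndFDerivAt (by simp)
  have h1 : HasDerivAt (fun s => fderiv ℝ F (s, t) (0, 1))
      (fderiv ℝ (fderiv ℝ F) (r, t) (1, 0) (0, 1)) r := by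
    have := (hF'.hasFDerivAt.comp_hasDerivAt (f := fun s : ℝ => (s, t)) r
      ((hasDerivAt_id r).prodMk (hasDerivAt_const r t))).clm_apply
      (hasDerivAt_const r ((0, 1) : ℝ × ℝ))
    simpa using this
  have h2 : HasDerivAt (fun τ => fderiv ℝ F (r, τ) (1, 0))
      (fderiv ℝ (fderiv ℝ F) (r, t) (0, 1) (1, 0)) t := by
    have := (hF'.hasFDerivAt.comp_hasDerivAt (f := fun τ : ℝ => (r, τ)) t
      ((hasDerivAt_const t r).prodMk (hasDerivAt_id t))).clm_apply
      (hasDerivAt_const t ((1, 0) : ℝ × ℝ))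
    simpa using this
  have c1 : Tendsto (fun s : ℝ => (s, t)) (𝓝 r) (𝓝 (r, t)) :=
    Continuous.tendsto (by fun_prop : Continuous fun s : ℝ => (s, t)) r
  have c2 : Tendsto (fun τ : ℝ => (r, τ)) (𝓝 t) (𝓝 (r, t)) :=
    Continuous.tendsto (by fun_prop : Continuous fun τ : ℝ => (r, τ)) t
  have e1 : (fun s => deriv (u s) t) =ᶠ[𝓝 r] fun s => fderiv ℝ F (s, t) (0, 1) := by
    filter_upwards [c1.eventually hd] with s hs using (hasDerivAt_right hs).deriv
  have e2 : (fun τ => deriv (fun s => u s τ) r) =ᶠ[𝓝 t] fun τ => fderiv ℝ F (r, τ) (1, 0) := by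
    filter_upwards [c2.eventually hd] with τ hτ using (hasDerivAt_left hτ).deriv
  rw [(h1.congr_of_eventuallyEq e1).deriv, hsymm.eq (1, 0) (0, 1)]
  exact h2.congr_of_eventuallyEq e2

/-- Coupled identity for `J₁, J₂` (proof of Theorem 3.1): let `λ₁ = λ₂ = λ > 0` and let
`(u,v)` be a (smooth) radial classical solution.  Then for `0 < r < R`, `0 < t < T`,
`J₁ₜ − J₁ᵣᵣ − ((n−1)/r) J₁ᵣ + ((n−1)/r²) J₁ − λ e^v J₂ = (r/R) e^v v_r² + (2/R) e^v v_r`;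
in particular, if `v_r ≥ 0` the left-hand side is nonnegative. -/
theorem coupled_identity_J1_J2 {n : ℕ} (hn : 1 ≤ n) {R T lam : ℝ}
    (hR : 0 < R) (hT : 0 < T) (hlam : 0 < lam)
    {u v : ℝ → ℝ → ℝ} (hsol : IsRadialSolution n R T lam lam u v)
    (hu : ContDiffOn ℝ (⊤ : ℕ∞) (fun p : ℝ × ℝ => u p.1 p.2) (Icc (0 : ℝ) R ×ˢ Ioo (0 : ℝ) T))
    (hv : ContDiffOn ℝ (⊤ : ℕ∞) (fun p : ℝ × ℝ => v p.1 p.2) (Icc (0 : ℝ) R ×ˢ Ioo (0 : ℝ) T)) :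
    ∀ r ∈ Ioo (0 : ℝ) R, ∀ t ∈ Ioo (0 : ℝ) T,
      (deriv (fun τ => J1fun u v R r τ) t
        - dr R (dr R (fun s => J1fun u v R s t)) r
        - ((n - 1 : ℝ) / r) * dr R (fun s => J1fun u v R s t) r
        + ((n - 1 : ℝ) / r ^ 2) * J1fun u v R r t
        - lam * Real.exp (v r t) * J2fun u v R r t
        = (r / R) * Real.exp (v r t) * (dr R (fun s => v s t) r) ^ 2
          + (2 / R) * Real.exp (v r t) * dr R (fun s => v s t) r) ∧
      (0 ≤ dr R (fun s => v s t) r →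
        0 ≤ deriv (fun τ => J1fun u v R r τ) t
          - dr R (dr R (fun s => J1fun u v R s t)) r
          - ((n - 1 : ℝ) / r) * dr R (fun s => J1fun u v R s t) r
          + ((n - 1 : ℝ) / r ^ 2) * J1fun u v R r t
          - lam * Real.exp (v r t) * J2fun u v R r t) := by
  intro r hr t ht
  have hr0 : r ≠ 0 := hr.1.ne'
  have hR0 : R ≠ 0 := hR.ne'
  have hC : ∀ {w : ℝ → ℝ → ℝ}, ContDiffOn ℝ (⊤ : ℕ∞) (fun p : ℝ × ℝ => w p.1 p.2)
      (Icc (0 : ℝ) R ×ˢ Ioo (0 : ℝ) T) → ∀ s ∈ Ioo (0 : ℝ) R,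
      ContDiffAt ℝ (⊤ : ℕ∞) (fun p : ℝ × ℝ => w p.1 p.2) (s, t) := fun hw s hs =>
    hw.contDiffAt (prod_mem_nhds (Icc_mem_nhds hs.1 hs.2) (Ioo_mem_nhds ht.1 ht.2))
  have hS : ∀ {w : ℝ → ℝ → ℝ}, ContDiffOn ℝ (⊤ : ℕ∞) (fun p : ℝ × ℝ => w p.1 p.2)
      (Icc (0 : ℝ) R ×ˢ Ioo (0 : ℝ) T) →
      ContDiffOn ℝ (⊤ : ℕ∞) (fun s => w s t) (Ioo (0 : ℝ) R) := fun hw s hs =>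
    ((hC hw s hs).comp (f := fun s : ℝ => (s, t)) s
      (contDiffAt_id.prodMk contDiffAt_const)).contDiffWithinAt
  -- Iterated `r`-derivatives of a smooth slice are again smooth on the open interval.
  have hD : ∀ {f : ℝ → ℝ}, ContDiffOn ℝ (⊤ : ℕ∞) f (Ioo (0 : ℝ) R) →
      ContDiffOn ℝ (⊤ : ℕ∞) (deriv f) (Ioo (0 : ℝ) R) := fun hf =>
    hf.deriv_of_isOpen isOpen_Ioo (by simp)
  have hH : ∀ {f : ℝ → ℝ}, ContDiffOn ℝ (⊤ : ℕ∞) f (Ioo (0 : ℝ) R) → ∀ s ∈ Ioo (0 : ℝ) R,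
      HasDerivAt f (deriv f s) s := fun hf s hs =>
    ((hf.contDiffAt (Ioo_mem_nhds hs.1 hs.2)).differentiableAt (by simp)).hasDerivAt
  set U : ℝ → ℝ := fun s => u s t with hU
  set V : ℝ → ℝ := fun s => v s t with hV
  have hUs : ContDiffOn ℝ (⊤ : ℕ∞) U (Ioo (0 : ℝ) R) := hS hu
  have hVs : ContDiffOn ℝ (⊤ : ℕ∞) V (Ioo (0 : ℝ) R) := hS hv
  have hnhds := Ioo_mem_nhds hr.1 hr.2
  have hVe : ∀ s ∈ Ioo (0 : ℝ) R, HasDerivAt (fun s => Real.exp (V s))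
      (Real.exp (V s) * deriv V s) s := fun s hs => (hH hVs s hs).exp
  have hJ : ∀ s ∈ Ioo (0 : ℝ) R, J1fun u v R s t = deriv U s - (s / R) * Real.exp (V s) :=
    fun s hs => by rw [J1fun, dr_eq_deriv _ hs]
  have hJr : ∀ s ∈ Ioo (0 : ℝ) R, deriv (fun s => J1fun u v R s t) s =
      deriv (deriv U) s -
        (1 / R * Real.exp (V s) + (s / R) * (Real.exp (V s) * deriv V s)) := by
    intro s hs
    have h := (hH (hD hUs) s hs).sub (((hasDerivAt_id s).div_const R).mul (hVe s hs))
    refine (h.congr_of_eventuallyEq ?_).deriv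
    filter_upwards [Ioo_mem_nhds hs.1 hs.2] with x hx using hJ x hx
  have hJrr : deriv (deriv (fun s => J1fun u v R s t)) r =
      deriv (deriv (deriv U)) r -
        (1 / R * (Real.exp (V r) * deriv V r) + (1 / R * (Real.exp (V r) * deriv V r) +
          (r / R) * (Real.exp (V r) * deriv V r * deriv V r +
            Real.exp (V r) * deriv (deriv V) r))) := by
    have h := (hH (hD (hD hUs)) r hr).sub (((hVe r hr).const_mul (1 / R)).add
      (((hasDerivAt_id r).div_const R).mul ((hVe r hr).mul (hH (hD hVs) r hr))))
    refine (h.congr_of_eventuallyEq ?_).deriv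
    filter_upwards [hnhds] with x hx using hJr x hx
  -- The `r`-derivative of the equation for `u`.
  have hutr : deriv (fun s => deriv (u s) t) r = deriv (deriv (deriv U)) r
      + (-((n - 1 : ℝ) / r ^ 2) * deriv U r + ((n - 1 : ℝ) / r) * deriv (deriv U) r)
      + lam * (Real.exp (V r) * deriv V r) := by
    have hq : HasDerivAt (fun s : ℝ => (n - 1 : ℝ) / s) (-((n - 1 : ℝ) / r ^ 2)) r := by
      have := (hasDerivAt_inv hr0).const_mul (n - 1 : ℝ)
      simpa [div_eq_mul_inv] using this
    have h := ((hH (hD (hD hUs)) r hr).add (hq.mul (hH (hD hUs) r hr))).add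
      ((hVe r hr).const_mul lam)
    refine (h.congr_of_eventuallyEq ?_).deriv
    filter_upwards [hnhds] with x hx
    rw [hsol.pde_u x hx t ht, dr_dr_eq_deriv _ hx, dr_eq_deriv _ hx]
    rfl
  have hvt : deriv (v r) t = deriv (deriv V) r + ((n - 1 : ℝ) / r) * deriv V r
      + lam * Real.exp (u r t) := by
    rw [hsol.pde_v r hr t ht, dr_dr_eq_deriv _ hr, dr_eq_deriv _ hr]
  have hJt : deriv (fun τ => J1fun u v R r τ) t =
      deriv (fun s => deriv (u s) t) r - (r / R) * (Real.exp (V r) * deriv (v r) t) := by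
    have hsw := deriv_deriv_swap ((hC hu r hr).of_le (WithTop.coe_le_coe.2 (le_top : (2 : ℕ∞) ≤ ⊤)))
    have hve := ((hsol.reg_t_v r (Ioo_subset_Icc_self hr) t ht).hasDerivAt.exp).const_mul (r / R)
    have h := hsw.sub hve
    have e : (fun τ => J1fun u v R r τ) =
        fun τ => deriv (fun s => u s τ) r - (r / R) * Real.exp (v r τ) := by
      funext τ
      rw [J1fun, dr_eq_deriv _ hr]
    rw [e]
    exact h.deriv
  have key : deriv (fun τ => J1fun u v R r τ) t
        - dr R (dr R (fun s => J1fun u v R s t)) r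
        - ((n - 1 : ℝ) / r) * dr R (fun s => J1fun u v R s t) r
        + ((n - 1 : ℝ) / r ^ 2) * J1fun u v R r t
        - lam * Real.exp (v r t) * J2fun u v R r t
        = (r / R) * Real.exp (v r t) * (dr R V r) ^ 2
          + (2 / R) * Real.exp (v r t) * dr R V r := by
    have hVr : v r t = V r := rfl
    rw [dr_dr_eq_deriv _ hr, dr_eq_deriv _ hr, dr_eq_deriv _ hr, hJrr, hJr r hr, hJ r hr, hJt,
      hutr, hvt, J2fun, dr_eq_deriv _ hr, ← hV, hVr]
    field_simp
    ring
  refine ⟨key, fun h0 => ?_⟩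
  rw [key]
  have := hr.1
  positivity
end

section
/- Boundary differential inequality (proof of Theorem 3.1): Let λ₁ = λ₂ = λ > 0 and let (u,v) be a radial classical solution as in the context, with u, v, u_r, v_r extending continuously with their second r-derivatives to r = R. Suppose J₁(r,t) = u_r(r,t) − (r/R)e^{v(r,t)} ≥ 0 for all (r,t) ∈ [0,R] × (0,T) (note J₁(R,t) = 0 by the boundary condition). Then for all t ∈ (0,T): u_t(R,t) ≤ ((n−1)/R) e^{v(R,t)} + λ e^{v(R,t)} + e^{u(R,t)+v(R,t)} + (1/R) e^{v(R,t)}. -/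
/-!
At the outer boundary `J₁ = u_r - (r/R) e^v` vanishes by the boundary condition, while `J₁ ≥ 0` on
`[0,R]`, so its one-sided derivative at `r = R` is nonpositive
(`hasDerivWithinAt_nonpos_of_right_endpoint_min`).  Computing that derivative with
`v_r(R,t) = e^{u(R,t)}` gives `u_rr(R,t) ≤ e^{u+v} + (1/R) e^v`.  By continuity in `r` of all the
terms, the equation for `u`, assumed only for `0 < r < R`, also holds at `r = R`; inserting
`u_r(R,t) = e^{v(R,t)}` and the bound for `u_rr(R,t)` gives the claim.
-/

open Set Real Filter Topology

theorem hasDerivWithinAt_nonpos_of_right_endpoint_min {R d : ℝ} {f : ℝ → ℝ} (hR : 0 < R)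
    (hf : HasDerivWithinAt f d (Icc 0 R) R) (hmin : ∀ r ∈ Icc 0 R, f R ≤ f r) : d ≤ 0 := by
  have h := hasDerivWithinAt_iff_tendsto_slope.mp hf
  have hne : (𝓝[Icc 0 R \ {R}] R).NeBot := by
    rw [Icc_sdiff_right, nhdsWithin_Ico_eq_nhdsLT hR]
    infer_instance
  refine le_of_tendsto h ?_
  filter_upwards [self_mem_nhdsWithin] with r hr
  rw [slope_def_field]
  exact div_nonpos_of_nonneg_of_nonpos (sub_nonneg.mpr (hmin r hr.1)) (sub_nonpos.mpr hr.1.2)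

/-- The differential equation for `u` extends by continuity from the interior to `r = R`. -/
theorem IsRadialSolution.pde_u_boundary {n : ℕ} {R T lam1 lam2 : ℝ} {u v : ℝ → ℝ → ℝ}
    (hsol : IsRadialSolution n R T lam1 lam2 u v) (hR : 0 < R) {t : ℝ} (ht : t ∈ Ioo (0 : ℝ) T)
    (hu1 : ContinuousOn (dr R (fun s => u s t)) (Icc (0 : ℝ) R))
    (hu2 : ContinuousOn (dr R (dr R (fun s => u s t))) (Icc (0 : ℝ) R))
    (hut : ContinuousOn (fun r => deriv (u r) t) (Icc (0 : ℝ) R)) :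
    deriv (u R) t = dr R (dr R (fun s => u s t)) R
      + ((n - 1 : ℝ) / R) * dr R (fun s => u s t) R + lam1 * Real.exp (v R t) := by
  have hRm : R ∈ Icc 0 R := ⟨hR.le, le_rfl⟩
  have hle : 𝓝[<] R ≤ 𝓝[Icc 0 R] R := by
    rw [← nhdsWithin_Ioo_eq_nhdsLT hR]
    exact nhdsWithin_mono _ Ioo_subset_Icc_self
  have hv : ContinuousWithinAt (fun r => v r t) (Icc 0 R) R :=
    (hsol.reg_r_v t ht).continuousOn R hRm
  have hrhs : ContinuousWithinAt (fun r => dr R (dr R (fun s => u s t)) r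
      + ((n - 1 : ℝ) / r) * dr R (fun s => u s t) r + lam1 * Real.exp (v r t)) (Icc 0 R) R :=
    ((hu2 R hRm).add ((continuousWithinAt_const.div continuousWithinAt_id hR.ne').mul
      (hu1 R hRm))).add (continuousWithinAt_const.mul hv.rexp)
  refine tendsto_nhds_unique_of_eventuallyEq ((hut R hRm).mono_left hle) (hrhs.mono_left hle) ?_
  filter_upwards [Ioo_mem_nhdsLT hR] with r hr using hsol.pde_u r hr t ht

/-- Boundary differential inequality (proof of Theorem 3.1): let `λ₁ = λ₂ = λ > 0` and
let `(u,v)` be a radial classical solution whose first and second `r`-derivatives and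
time derivatives extend continuously to `r = R`.  If
`J₁(r,t) = u_r(r,t) − (r/R) e^{v(r,t)} ≥ 0` on `[0,R] × (0,T)`, then for every
`t ∈ (0,T)`:
`u_t(R,t) ≤ ((n−1)/R) e^{v(R,t)} + λ e^{v(R,t)} + e^{u(R,t)+v(R,t)} + (1/R) e^{v(R,t)}`. -/
theorem boundary_differential_inequality {n : ℕ} (hn : 1 ≤ n) {R T lam : ℝ}
    (hR : 0 < R) (hT : 0 < T) (hlam : 0 < lam)
    {u v : ℝ → ℝ → ℝ} (hsol : IsRadialSolution n R T lam lam u v)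
    (hext_u1 : ∀ t ∈ Ioo (0 : ℝ) T, ContinuousOn (dr R (fun s => u s t)) (Icc (0 : ℝ) R))
    (hext_u2 : ∀ t ∈ Ioo (0 : ℝ) T,
      ContinuousOn (dr R (dr R (fun s => u s t))) (Icc (0 : ℝ) R))
    (hext_v1 : ∀ t ∈ Ioo (0 : ℝ) T, ContinuousOn (dr R (fun s => v s t)) (Icc (0 : ℝ) R))
    (hext_v2 : ∀ t ∈ Ioo (0 : ℝ) T,
      ContinuousOn (dr R (dr R (fun s => v s t))) (Icc (0 : ℝ) R))
    (hext_ut : ∀ t ∈ Ioo (0 : ℝ) T, ContinuousOn (fun r => deriv (u r) t) (Icc (0 : ℝ) R))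
    (hext_vt : ∀ t ∈ Ioo (0 : ℝ) T, ContinuousOn (fun r => deriv (v r) t) (Icc (0 : ℝ) R))
    (hJ1 : ∀ r ∈ Icc (0 : ℝ) R, ∀ t ∈ Ioo (0 : ℝ) T,
      0 ≤ dr R (fun s => u s t) r - (r / R) * Real.exp (v r t)) :
    ∀ t ∈ Ioo (0 : ℝ) T,
      deriv (u R) t ≤ ((n - 1 : ℝ) / R) * Real.exp (v R t) + lam * Real.exp (v R t)
        + Real.exp (u R t + v R t) + (1 / R) * Real.exp (v R t) := by
  intro t ht
  have hRm : R ∈ Icc 0 R := ⟨hR.le, le_rfl⟩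
  have huniq : UniqueDiffOn ℝ (Icc 0 R) := uniqueDiffOn_Icc hR
  have hdu : HasDerivWithinAt (dr R (fun s => u s t)) (dr R (dr R (fun s => u s t)) R)
      (Icc 0 R) R :=
    ((((hsol.reg_r_u t ht).derivWithin huniq (m := 1) (by norm_num)).differentiableOn
      one_ne_zero) R hRm).hasDerivWithinAt
  have hdv : HasDerivWithinAt (fun s => v s t) (Real.exp (u R t)) (Icc 0 R) R := by
    rw [← hsol.bc_v t ht]
    exact ((hsol.reg_r_v t ht).differentiableOn two_ne_zero R hRm).hasDerivWithinAt
  have hJ := hdu.sub (((hasDerivWithinAt_id R (Icc 0 R)).div_const R).mul hdv.exp)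
  have hsign := hasDerivWithinAt_nonpos_of_right_endpoint_min hR hJ (by
    intro r hr
    have h0 : dr R (fun s => u s t) R - R / R * Real.exp (v R t) = 0 := by
      rw [hsol.bc_u t ht, div_self hR.ne', one_mul, sub_self]
    have h1 := hJ1 r hr t ht
    rw [← h0] at h1
    exact h1)
  simp only [id, div_self hR.ne', one_mul] at hsign
  rw [hsol.pde_u_boundary hR ht (hext_u1 t ht) (hext_u2 t ht) (hext_ut t ht), hsol.bc_u t ht,
    Real.exp_add]
  linarith
end

section
/- ODE lemma for the lower blow-up rate (proof of Theorem 3.1): Let 0 ≤ a < T, C > 0, and let f : [a,T) → ℝ be differentiable with f'(t) ≤ C e^{2f(t)} for all t ∈ [a,T), and suppose f(t) → ∞ as t → T⁻. Then e^{−2f(t)} ≤ 2C(T−t) for all t ∈ [a,T); equivalently e^{f(t)} ≥ (2C(T−t))^{−1/2}. -/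
/-!
The function `g t = e^{-2f(t)} + 2Ct` has derivative `2C - 2 f'(t) e^{-2f(t)}`, which is nonnegative
because `f' ≤ C e^{2f}`. So `g` is nondecreasing on `[a,T)` and lies below its left limit at `T`,
which is `2CT` because `f → ∞`; this is the claimed bound.
-/

open Set Real Filter Topology

/-- ODE lemma for the lower blow-up rate (proof of Theorem 3.1): if `f` is differentiable
on `[a,T)` with `f' ≤ C e^{2f}` there and `f(t) → ∞` as `t → T⁻`, then
`e^{−2f(t)} ≤ 2C(T−t)` on `[a,T)`. -/
theorem ode_lemma_lower_rate {a T C : ℝ} (ha : 0 ≤ a) (haT : a < T) (hC : 0 < C)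
    {f f' : ℝ → ℝ}
    (hderiv : ∀ t ∈ Ico a T, HasDerivWithinAt f (f' t) (Ico a T) t)
    (hineq : ∀ t ∈ Ico a T, f' t ≤ C * Real.exp (2 * f t))
    (hblow : Tendsto f (𝓝[<] T) atTop) :
    ∀ t ∈ Ico a T, Real.exp (-(2 * f t)) ≤ 2 * C * (T - t) := by
  have hg : ∀ t ∈ Ico a T, HasDerivWithinAt (fun s => Real.exp (-(2 * f s)) + 2 * C * s)
      (Real.exp (-(2 * f t)) * (-(2 * f' t)) + 2 * C * 1) (Ico a T) t := fun t ht =>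
    ((hderiv t ht).const_mul 2).neg.exp.add ((hasDerivWithinAt_id t _).const_mul (2 * C))
  have hmono : MonotoneOn (fun s => Real.exp (-(2 * f s)) + 2 * C * s) (Ico a T) := by
    refine monotoneOn_of_hasDerivWithinAt_nonneg (convex_Ico a T)
      (fun t ht => (hg t ht).continuousWithinAt)
      (fun t ht => (hg t (interior_subset ht)).mono interior_subset) (fun t ht => ?_)
    have h1 := mul_le_mul_of_nonneg_left (hineq t (interior_subset ht))
      (Real.exp_pos (-(2 * f t))).le
    have h2 : Real.exp (-(2 * f t)) * Real.exp (2 * f t) = 1 := by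
      rw [← Real.exp_add, neg_add_cancel, Real.exp_zero]
    linear_combination 2 * h1 + 2 * C * h2
  have hlim : Tendsto (fun s => Real.exp (-(2 * f s)) + 2 * C * s) (𝓝[<] T)
      (𝓝 (0 + 2 * C * T)) := by
    refine Tendsto.add ?_ ?_
    · exact Real.tendsto_exp_neg_atTop_nhds_zero.comp (hblow.const_mul_atTop two_pos)
    · exact ((continuous_const.mul continuous_id).tendsto T).mono_left nhdsWithin_le_nhds
  intro t ht
  have hle : Real.exp (-(2 * f t)) + 2 * C * t ≤ 0 + 2 * C * T := by
    refine ge_of_tendsto hlim ?_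
    filter_upwards [Ioo_mem_nhdsLT ht.2] with s hs
    exact hmono ht ⟨ht.1.trans hs.1.le, hs.2⟩ hs.1.le
  linarith
end

section
/- ODE lemma for the upper blow-up rate (proof of Theorem 3.2): Let z < T be real numbers, a > 0, and let A : (z,T) → ℝ be differentiable with A'(t) ≥ a e^{A(t)} (T−t)^{−1/2} for all t ∈ (z,T), and suppose A(t) → ∞ as t → T⁻. Then e^{−A(t)} ≥ 2a√(T−t) for all t ∈ (z,T); equivalently e^{A(t)} ≤ (2a)^{−1}(T−t)^{−1/2}. -/
/-!
The inequality `A' ≥ a e^A (T - t)^{-1/2}` says that `(e^{-A})' ≤ -a (T - t)^{-1/2}`, and the right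
side is the derivative of `2a√(T - t)`. So `φ = e^{-A} - 2a√(T - ·)` is nonincreasing on `(z,T)`.
Both of its terms tend to `0` at `T⁻`, the first because `A → ∞`; hence `φ ≥ 0`.
-/

open Set Real Filter Topology

/-- ODE lemma for the upper blow-up rate (proof of Theorem 3.2): if `A` is differentiable
on `(z,T)` with `A'(t) ≥ a e^{A(t)} (T−t)^{−1/2}` there and `A(t) → ∞` as `t → T⁻`, then
`e^{−A(t)} ≥ 2a√(T−t)` on `(z,T)`. -/
theorem ode_lemma_upper_rate {z T a : ℝ} (hzT : z < T) (ha : 0 < a)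
    {A : ℝ → ℝ}
    (hdiff : ∀ t ∈ Ioo z T, DifferentiableAt ℝ A t)
    (hineq : ∀ t ∈ Ioo z T, a * Real.exp (A t) / Real.sqrt (T - t) ≤ deriv A t)
    (hblow : Tendsto A (𝓝[<] T) atTop) :
    ∀ t ∈ Ioo z T, 2 * a * Real.sqrt (T - t) ≤ Real.exp (-(A t)) := by
  have hderiv : ∀ t ∈ Ioo z T, HasDerivAt
      (fun s => Real.exp (-(A s)) - 2 * a * Real.sqrt (T - s))
      (Real.exp (-(A t)) * (-deriv A t) - 2 * a * (-1 / (2 * Real.sqrt (T - t)))) t := by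
    intro t ht
    have hpos : 0 < T - t := sub_pos.mpr ht.2
    exact ((hdiff t ht).hasDerivAt.neg.exp).sub
      ((((hasDerivAt_id t).const_sub T).sqrt hpos.ne').const_mul (2 * a))
  have hanti : AntitoneOn (fun s => Real.exp (-(A s)) - 2 * a * Real.sqrt (T - s))
      (Ioo z T) := by
    refine antitoneOn_of_deriv_nonpos (convex_Ioo z T)
      (fun t ht => (hderiv t ht).continuousAt.continuousWithinAt) ?_ ?_
    · rw [interior_Ioo]
      exact fun t ht => (hderiv t ht).differentiableAt.differentiableWithinAt
    · rw [interior_Ioo]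
      intro t ht
      rw [(hderiv t ht).deriv]
      have hs : 0 < Real.sqrt (T - t) := Real.sqrt_pos.mpr (sub_pos.mpr ht.2)
      have h1 := mul_le_mul_of_nonneg_left (hineq t ht) (Real.exp_pos (-(A t))).le
      have h2 : Real.exp (-(A t)) * (a * Real.exp (A t) / Real.sqrt (T - t))
          = a / Real.sqrt (T - t) := by
        rw [Real.exp_neg]
        field_simp
      have h3 : 2 * a * (-1 / (2 * Real.sqrt (T - t))) = -(a / Real.sqrt (T - t)) := by
        field_simp
      rw [h2] at h1
      rw [h3]
      linarith
  have hlim : Tendsto (fun s => Real.exp (-(A s)) - 2 * a * Real.sqrt (T - s))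
      (𝓝[<] T) (𝓝 0) := by
    have h1 : Tendsto (fun s => Real.exp (-(A s))) (𝓝[<] T) (𝓝 0) :=
      Real.tendsto_exp_neg_atTop_nhds_zero.comp hblow
    have h2 : Tendsto (fun s => 2 * a * Real.sqrt (T - s)) (𝓝[<] T) (𝓝 0) := by
      have hc : Continuous (fun s => 2 * a * Real.sqrt (T - s)) := by fun_prop
      have := hc.tendsto T
      simp only [sub_self, Real.sqrt_zero, mul_zero] at this
      exact this.mono_left nhdsWithin_le_nhds
    simpa using h1.sub h2
  intro t ht
  refine sub_nonneg.mp (le_of_tendsto hlim ?_)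
  filter_upwards [Ioo_mem_nhdsLT ht.2] with s hs
  exact hanti ht ⟨ht.1.trans hs.1, hs.2⟩ hs.1.le
end

section
/- Supersolution inequality for the comparison function (proof of Theorem 4.1): Let n ≥ 1, R > 0, T > 0, A > 0 and B > 0 with B ≥ A(4(n+4)R² + 1). Define z(x,t) = −log(A(R² − |x|²)² + B(T−t)) for (x,t) ∈ cl(B_R) × (0,T), where B_R = {x ∈ ℝⁿ : |x| < R}. Then z_t − Δz − A e^{z} ≥ 0 at every point of B_R × (0,T), where Δ is the Euclidean Laplacian in x. -/
/-!
Write `u = R² − |x|²`, `D = A u² + B (T − t)`, so `z = −log D`. Along the `i`-th coordinate line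
`D` is the quartic `s ↦ A (u − 2 xᵢ s − s²)² + B (T − t)`, so the second derivative of `z` in that
direction is explicit (`iteratedDeriv_two_neg_log`), and summing over `i` gives
`Δz = (4 n A u − 8 A |x|²) / D + 16 A² u² |x|² / D²`. Since `z_t = B / D` and `e^z = 1 / D`, the
claim becomes `16 A² u² |x|² / D ≤ B − A − 4 n A u + 8 A |x|²`. As `A u² ≤ D`, the left side is at
most `16 A |x|²`, and the hypothesis on `B` together with `|x| ≤ R` and `u ≤ R²` finishes the proof.
-/

open Set Real Metric Filter Topology

/-- The Euclidean Laplacian of `f : ℝⁿ → ℝ` at `x`, computed as the sum of second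
directional derivatives along the coordinate directions. -/
noncomputable def lap {n : ℕ} (f : EuclideanSpace ℝ (Fin n) → ℝ)
    (x : EuclideanSpace ℝ (Fin n)) : ℝ :=
  ∑ i : Fin n, iteratedDeriv 2 (fun s : ℝ => f (x + s • EuclideanSpace.single i (1 : ℝ))) 0

/-- The second derivative at `0` of `−log` of the restriction of `D` to a line; here `c` stands for
`R² − |x|²`, `a` for `xᵢ` and `K` for `B (T − t)`. -/
lemma iteratedDeriv_two_neg_log {A K : ℝ} (hA : 0 < A) (hK : 0 < K) (c a : ℝ) :
    iteratedDeriv 2 (fun s : ℝ => -Real.log (A * (c - 2 * a * s - s ^ 2) ^ 2 + K)) 0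
      = (4 * A * c - 8 * A * a ^ 2) / (A * c ^ 2 + K)
        + 16 * A ^ 2 * c ^ 2 * a ^ 2 / (A * c ^ 2 + K) ^ 2 := by
  have hpos : ∀ s : ℝ, 0 < A * (c - 2 * a * s - s ^ 2) ^ 2 + K := fun s => by positivity
  have hq : ∀ s : ℝ, HasDerivAt (fun s : ℝ => c - 2 * a * s - s ^ 2) (-2 * a - 2 * s) s := by
    intro s
    have h := (((hasDerivAt_id' s).const_mul (2 * a)).const_sub c).sub ((hasDerivAt_id' s).pow 2)
    refine h.congr_deriv ?_
    norm_num
  have hg : ∀ s : ℝ, HasDerivAt (fun s : ℝ => A * (c - 2 * a * s - s ^ 2) ^ 2 + K)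
      (2 * A * (c - 2 * a * s - s ^ 2) * (-2 * a - 2 * s)) s := by
    intro s
    refine ((((hq s).pow 2).const_mul A).add_const K).congr_deriv ?_
    norm_num
    ring
  have hd : deriv (fun s : ℝ => -Real.log (A * (c - 2 * a * s - s ^ 2) ^ 2 + K))
      = fun s => -(2 * A * (c - 2 * a * s - s ^ 2) * (-2 * a - 2 * s)
          / (A * (c - 2 * a * s - s ^ 2) ^ 2 + K)) := by
    funext s
    exact ((hg s).log (hpos s).ne').neg.deriv
  have hl : HasDerivAt (fun s : ℝ => -2 * a - 2 * s) (-2) 0 := by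
    refine (((hasDerivAt_id' (0 : ℝ)).const_mul 2).const_sub (-2 * a)).congr_deriv ?_
    norm_num
  have h2 := ((((hq 0).const_mul (2 * A)).mul hl).div (hg 0) (hpos 0).ne').neg
  rw [iteratedDeriv_succ, iteratedDeriv_one, hd]
  refine h2.deriv.trans ?_
  have hD : A * c ^ 2 + K ≠ 0 := by positivity
  simp only [Pi.mul_apply, mul_zero, sub_zero, ne_eq, OfNat.ofNat_ne_zero, not_false_eq_true,
    zero_pow]
  field_simp
  ring

lemma norm_add_smul_single_sq {n : ℕ} (x : EuclideanSpace ℝ (Fin n)) (i : Fin n) (s : ℝ) :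
    ‖x + s • EuclideanSpace.single i (1 : ℝ)‖ ^ 2 = ‖x‖ ^ 2 + 2 * x i * s + s ^ 2 := by
  rw [norm_add_sq_real, inner_smul_right, norm_smul, EuclideanSpace.inner_single_right]
  simp
  ring

/-- Supersolution inequality for the comparison function (proof of Theorem 4.1):
let `A > 0` and `B ≥ A(4(n+4)R² + 1)`, and set
`z(x,t) = −log(A(R² − |x|²)² + B(T−t))`.  Then `z_t − Δz − A e^z ≥ 0` on `B_R × (0,T)`. -/
theorem supersolution_inequality {n : ℕ} (hn : 1 ≤ n) {R T A B : ℝ}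
    (hR : 0 < R) (hT : 0 < T) (hA : 0 < A) (hB : 0 < B)
    (hAB : A * (4 * (n + 4 : ℝ) * R ^ 2 + 1) ≤ B) :
    ∀ x ∈ ball (0 : EuclideanSpace ℝ (Fin n)) R, ∀ t ∈ Ioo (0 : ℝ) T,
      0 ≤ deriv (fun τ : ℝ =>
            -Real.log (A * (R ^ 2 - ‖x‖ ^ 2) ^ 2 + B * (T - τ))) t
        - lap (fun y : EuclideanSpace ℝ (Fin n) =>
            -Real.log (A * (R ^ 2 - ‖y‖ ^ 2) ^ 2 + B * (T - t))) x
        - A * Real.exp (-Real.log (A * (R ^ 2 - ‖x‖ ^ 2) ^ 2 + B * (T - t))) := by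
  intro x hx t ht
  have hxR : ‖x‖ < R := by simpa using hx
  have hK : 0 < B * (T - t) := mul_pos hB (sub_pos.2 ht.2)
  have hD : 0 < A * (R ^ 2 - ‖x‖ ^ 2) ^ 2 + B * (T - t) := by positivity
  have ht' : deriv (fun τ : ℝ => -Real.log (A * (R ^ 2 - ‖x‖ ^ 2) ^ 2 + B * (T - τ))) t
      = B / (A * (R ^ 2 - ‖x‖ ^ 2) ^ 2 + B * (T - t)) := by
    have h := (((((hasDerivAt_id t).const_sub T).const_mul B).const_add
      (A * (R ^ 2 - ‖x‖ ^ 2) ^ 2)).log hD.ne').neg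
    refine h.deriv.trans ?_
    simp [neg_div]
  have hlap : lap (fun y : EuclideanSpace ℝ (Fin n) =>
        -Real.log (A * (R ^ 2 - ‖y‖ ^ 2) ^ 2 + B * (T - t))) x
      = (4 * n * A * (R ^ 2 - ‖x‖ ^ 2) - 8 * A * ‖x‖ ^ 2)
          / (A * (R ^ 2 - ‖x‖ ^ 2) ^ 2 + B * (T - t))
        + 16 * A ^ 2 * (R ^ 2 - ‖x‖ ^ 2) ^ 2 * ‖x‖ ^ 2
          / (A * (R ^ 2 - ‖x‖ ^ 2) ^ 2 + B * (T - t)) ^ 2 := by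
    have hterm : ∀ i : Fin n, iteratedDeriv 2 (fun s : ℝ =>
        -Real.log (A * (R ^ 2 - ‖x + s • EuclideanSpace.single i (1 : ℝ)‖ ^ 2) ^ 2
          + B * (T - t))) 0 = _ := fun i => by
      refine Eq.trans ?_ (iteratedDeriv_two_neg_log hA hK (R ^ 2 - ‖x‖ ^ 2) (x i))
      congr 1
      funext s
      rw [norm_add_smul_single_sq]
      ring_nf
    have hsum : ∑ i, x i ^ 2 = ‖x‖ ^ 2 := (EuclideanSpace.real_norm_sq_eq x).symm
    unfold lap
    simp only [hterm]
    rw [Finset.sum_add_distrib, ← Finset.sum_div, ← Finset.sum_div, Finset.sum_sub_distrib,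
      Finset.sum_const, ← Finset.mul_sum, ← Finset.mul_sum, hsum]
    simp only [Finset.card_univ, Fintype.card_fin, nsmul_eq_mul]
    ring
  rw [ht', hlap, Real.exp_neg, Real.exp_log hD]
  have hr : 0 ≤ ‖x‖ ^ 2 := by positivity
  have hrR : ‖x‖ ^ 2 ≤ R ^ 2 := by gcongr
  have hAD : A * (R ^ 2 - ‖x‖ ^ 2) ^ 2 ≤ A * (R ^ 2 - ‖x‖ ^ 2) ^ 2 + B * (T - t) := by linarith
  generalize ‖x‖ ^ 2 = r at *
  generalize A * (R ^ 2 - r) ^ 2 + B * (T - t) = D at *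
  have h1 : 16 * A * r * (A * (R ^ 2 - r) ^ 2) ≤ 16 * A * r * D := by gcongr
  have h2 : 0 ≤ B - A - 4 * n * A * (R ^ 2 - r) - 8 * A * r := by
    have e1 : 0 ≤ A * (R ^ 2 - r) := mul_nonneg hA.le (by linarith)
    have e2 : 0 ≤ n * (A * r) := by positivity
    nlinarith [mul_nonneg hA.le hr]
  have key : 0 ≤ ((B - A - 4 * n * A * (R ^ 2 - r) + 8 * A * r) * D
      - 16 * A * r * (A * (R ^ 2 - r) ^ 2)) / D ^ 2 := by
    apply div_nonneg _ (by positivity)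
    nlinarith [mul_nonneg h2 hD.le]
  convert key using 1
  field_simp
  ring
end

section
/- Bound on the normal derivative of the heat kernel on the sphere (proof of Theorem 3.2): Let n ≥ 2, R > 0, S₀ > 0, and let Γ(x,t) = (4πt)^{−n/2} exp(−|x|²/(4t)). For x, y ∈ S_R = {z ∈ ℝⁿ : |z| = R} with x ≠ y and s > 0, the outward normal derivative in y satisfies ∂Γ/∂η_y(x−y,s) := ∇_xΓ(x−y,s)·(−y/R) evaluated appropriately, with |∂Γ/∂η_y(x−y,s)| = (|x−y|²/(4Rs)) Γ(x−y,s). Moreover, for every σ ∈ (0,1) and every μ ∈ (1 − σ/2, 1) there exists C* > 0 such that for all x, y ∈ S_R with x ≠ y and all s ∈ (0, S₀]: |∂Γ/∂η_y(x−y,s)| ≤ C* s^{−μ} |x−y|^{−(n+1−2μ−σ)}. -/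
/-!
On the sphere, `⟪x - y, y⟫ = -|x - y|² / 2`, so the derivative of `|x - y - τ y / R|²` at `τ = 0`
is `|x - y|² / R`, and the chain rule gives
`∂Γ/∂η_y(x - y, s) = -(|x - y|² / (4 R s)) Γ(x - y, s)`.

For the bound, write `d = |x - y|` and `a = n/2 + 1 - μ > 0`. The elementary inequality
`u ^ a * exp (-u) ≤ a ^ a`, applied to `u = d² / (4 s)`, shows
`s ^ (-a) * exp (-d² / (4 s)) ≤ (4 a) ^ a * d ^ (-2 a)`. Hence the derivative is at most a constant
times `s ^ (-μ) * d ^ (2 - 2 a) = s ^ (-μ) * d ^ (-(n - 2 μ))`. The exponent differs from the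
required one by `1 - σ > 0`, and `d ^ (1 - σ) ≤ (2 R) ^ (1 - σ)` since `d ≤ 2 R`.
-/

open Set Real Metric Filter Topology MeasureTheory

/-- The fundamental solution of the heat equation in `ℝⁿ`:
`Γ(x,t) = (4πt)^{−n/2} exp(−|x|²/(4t))`. -/
noncomputable def heatKernel (n : ℕ) (x : EuclideanSpace ℝ (Fin n)) (t : ℝ) : ℝ :=
  (4 * π * t) ^ (-(n : ℝ) / 2) * Real.exp (-‖x‖ ^ 2 / (4 * t))

/-- The outward normal derivative in `y` of the heat kernel on the sphere of radius `R`: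
the directional derivative of `z ↦ Γ(x−z, s)` at `z = y` in the direction `η_y = y/R`. -/
noncomputable def heatKernelNormalDeriv (n : ℕ) (R : ℝ)
    (x y : EuclideanSpace ℝ (Fin n)) (s : ℝ) : ℝ :=
  deriv (fun τ : ℝ => heatKernel n (x - (y + τ • (R⁻¹ • y))) s) 0

theorem hasDerivAt_heatKernel_normal {n : ℕ} {R : ℝ} (hR : 0 < R)
    {x y : EuclideanSpace ℝ (Fin n)} (hx : ‖x‖ = R) (hy : ‖y‖ = R) {s : ℝ} (hs : 0 < s) :
    HasDerivAt (fun τ : ℝ => heatKernel n (x - (y + τ • (R⁻¹ • y))) s)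
      (-(‖x - y‖ ^ 2 / (4 * R * s) * heatKernel n (x - y) s)) 0 := by
  have hinner : inner ℝ (x - y) y = -‖x - y‖ ^ 2 / 2 := by
    have h := norm_add_sq_real (x - y) y
    rw [sub_add_cancel, hx, hy] at h
    linarith
  -- On the sphere the squared distance is an explicit quadratic polynomial in `τ`.
  have hquad : ∀ τ : ℝ, ‖x - (y + τ • (R⁻¹ • y))‖ ^ 2
      = ‖x - y‖ ^ 2 + τ * (R⁻¹ * ‖x - y‖ ^ 2) + τ ^ 2 := by
    intro τ
    rw [← sub_sub, norm_sub_sq_real, inner_smul_right, inner_smul_right, hinner,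
      norm_smul, norm_smul, hy, mul_pow, mul_pow, norm_eq_abs, norm_eq_abs, sq_abs, sq_abs]
    field_simp
    ring
  have hpoly : HasDerivAt
      (fun τ : ℝ => ‖x - y‖ ^ 2 + τ * (R⁻¹ * ‖x - y‖ ^ 2) + τ ^ 2) (R⁻¹ * ‖x - y‖ ^ 2) 0 := by
    have h := (((hasDerivAt_id (0 : ℝ)).mul_const (R⁻¹ * ‖x - y‖ ^ 2)).const_add
      (‖x - y‖ ^ 2)).add ((hasDerivAt_id (0 : ℝ)).pow 2)
    exact h.congr_deriv (by simp)
  have h := ((hpoly.neg.div_const (4 * s)).exp).const_mul ((4 * π * s) ^ (-(n : ℝ) / 2))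
  simp only [heatKernel, hquad]
  refine h.congr_deriv ?_
  simp only [Pi.neg_apply, zero_mul, add_zero, ne_eq, OfNat.ofNat_ne_zero, not_false_eq_true,
    zero_pow]
  field_simp

theorem rpow_mul_exp_neg_le {a u : ℝ} (ha : 0 < a) (hu : 0 ≤ u) :
    u ^ a * Real.exp (-u) ≤ a ^ a := by
  -- The `a`-th power of `u / a ≤ exp (u / a)`.
  have h1 : u / a ≤ Real.exp (u / a) := by linarith [Real.add_one_le_exp (u / a)]
  have h2 : (u / a) ^ a ≤ Real.exp u := by
    calc (u / a) ^ a ≤ (Real.exp (u / a)) ^ a := rpow_le_rpow (by positivity) h1 ha.le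
      _ = Real.exp u := by rw [← Real.exp_mul, div_mul_cancel₀ _ ha.ne']
  rw [div_rpow hu ha.le, div_le_iff₀ (by positivity)] at h2
  rw [Real.exp_neg, ← div_eq_mul_inv, div_le_iff₀ (Real.exp_pos u), mul_comm]
  exact h2

theorem rpow_neg_mul_exp_le {a d s : ℝ} (ha : 0 < a) (hd : 0 < d) (hs : 0 < s) :
    s ^ (-a) * Real.exp (-d ^ 2 / (4 * s)) ≤ (4 * a) ^ a * d ^ (-(2 * a)) := by
  have h := rpow_mul_exp_neg_le ha (show 0 ≤ d ^ 2 / (4 * s) by positivity)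
  have hd2 : (d ^ 2) ^ a = d ^ (2 * a) := by
    rw [← rpow_natCast, ← rpow_mul hd.le]; norm_num
  rw [div_rpow (by positivity) (by positivity), mul_rpow (by norm_num) hs.le, hd2] at h
  rw [rpow_neg hs.le, rpow_neg hd.le, mul_rpow (by norm_num) ha.le, neg_div]
  have h4 : (0 : ℝ) < 4 ^ a := by positivity
  have hsa : 0 < s ^ a := by positivity
  have hda : 0 < d ^ (2 * a) := by positivity
  calc (s ^ a)⁻¹ * Real.exp (-(d ^ 2 / (4 * s)))
      = (d ^ (2 * a) / (4 ^ a * s ^ a) * Real.exp (-(d ^ 2 / (4 * s))))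
          * (4 ^ a * (d ^ (2 * a))⁻¹) := by field_simp
    _ ≤ a ^ a * (4 ^ a * (d ^ (2 * a))⁻¹) := by gcongr
    _ = 4 ^ a * a ^ a * (d ^ (2 * a))⁻¹ := by ring

/-- Bound on the normal derivative of the heat kernel on the sphere (proof of Theorem
3.2): for `x, y ∈ S_R`, `x ≠ y`, `s > 0`, one has
`|∂Γ/∂η_y(x−y,s)| = (|x−y|²/(4Rs)) Γ(x−y,s)`; moreover, for every `σ ∈ (0,1)` and
`μ ∈ (1−σ/2, 1)` there is `C* > 0` with
`|∂Γ/∂η_y(x−y,s)| ≤ C* s^{−μ} |x−y|^{−(n+1−2μ−σ)}` for all such `x, y` and `s ∈ (0,S₀]`. -/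
theorem heat_kernel_normal_derivative_bound {n : ℕ} (hn : 2 ≤ n) {R S₀ : ℝ}
    (hR : 0 < R) (hS₀ : 0 < S₀) :
    (∀ x ∈ sphere (0 : EuclideanSpace ℝ (Fin n)) R,
     ∀ y ∈ sphere (0 : EuclideanSpace ℝ (Fin n)) R, x ≠ y → ∀ s : ℝ, 0 < s →
       |heatKernelNormalDeriv n R x y s|
         = ‖x - y‖ ^ 2 / (4 * R * s) * heatKernel n (x - y) s) ∧
    (∀ sigma ∈ Ioo (0 : ℝ) 1, ∀ mu ∈ Ioo (1 - sigma / 2) 1,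
      ∃ Cstar : ℝ, 0 < Cstar ∧
        ∀ x ∈ sphere (0 : EuclideanSpace ℝ (Fin n)) R,
        ∀ y ∈ sphere (0 : EuclideanSpace ℝ (Fin n)) R, x ≠ y → ∀ s ∈ Ioc (0 : ℝ) S₀,
          |heatKernelNormalDeriv n R x y s|
            ≤ Cstar * s ^ (-mu) * ‖x - y‖ ^ (-((n : ℝ) + 1 - 2 * mu - sigma))) := by
  have hformula : ∀ x ∈ sphere (0 : EuclideanSpace ℝ (Fin n)) R,
      ∀ y ∈ sphere (0 : EuclideanSpace ℝ (Fin n)) R, ∀ s : ℝ, 0 < s →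
       |heatKernelNormalDeriv n R x y s|
         = ‖x - y‖ ^ 2 / (4 * R * s) * heatKernel n (x - y) s := by
    intro x hx y hy s hs
    rw [mem_sphere_zero_iff_norm] at hx hy
    rw [heatKernelNormalDeriv, (hasDerivAt_heatKernel_normal hR hx hy hs).deriv, abs_neg,
      abs_of_nonneg]
    unfold heatKernel
    positivity
  refine ⟨fun x hx y hy _ s hs => hformula x hx y hy s hs, ?_⟩
  rintro σ ⟨hσ0, hσ1⟩ μ ⟨hμ0, hμ1⟩
  obtain ⟨a, ha_def⟩ : ∃ a : ℝ, a = n / 2 + 1 - μ := ⟨_, rfl⟩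
  have ha : 0 < a := by
    have : (0 : ℝ) ≤ n := Nat.cast_nonneg n
    linarith
  refine ⟨(4 * R)⁻¹ * (4 * π) ^ (-(n : ℝ) / 2) * (4 * a) ^ a * (2 * R) ^ (1 - σ),
    by positivity, ?_⟩
  rintro x hx y hy hxy s ⟨hs, -⟩
  rw [hformula x hx y hy s hs, heatKernel]
  rw [mem_sphere_zero_iff_norm] at hx hy
  have hd : 0 < ‖x - y‖ := norm_pos_iff.mpr (sub_ne_zero.mpr hxy)
  have hd2R : ‖x - y‖ ≤ 2 * R := by
    have := norm_sub_le x y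
    linarith
  generalize ‖x - y‖ = d at hd hd2R ⊢
  have hspow : s⁻¹ * s ^ (-(n : ℝ) / 2) = s ^ (-μ) * s ^ (-a) := by
    rw [← rpow_neg_one, ← rpow_add hs, ← rpow_add hs]
    congr 1
    rw [ha_def]
    ring
  have hdpow : d ^ 2 * d ^ (-(2 * a)) = d ^ (1 - σ) * d ^ (-((n : ℝ) + 1 - 2 * μ - σ)) := by
    rw [← rpow_natCast d 2, ← rpow_add hd, ← rpow_add hd]
    congr 1
    rw [ha_def]
    push_cast
    ring
  have hsplit : (4 * π * s) ^ (-(n : ℝ) / 2)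
      = (4 * π) ^ (-(n : ℝ) / 2) * s ^ (-(n : ℝ) / 2) := mul_rpow (by positivity) hs.le
  have hdσ : d ^ (1 - σ) ≤ (2 * R) ^ (1 - σ) := rpow_le_rpow hd.le hd2R (by linarith)
  calc d ^ 2 / (4 * R * s) * ((4 * π * s) ^ (-(n : ℝ) / 2) * Real.exp (-d ^ 2 / (4 * s)))
      = (4 * R)⁻¹ * (4 * π) ^ (-(n : ℝ) / 2) * d ^ 2 * (s⁻¹ * s ^ (-(n : ℝ) / 2))
          * Real.exp (-d ^ 2 / (4 * s)) := by
        rw [hsplit, div_eq_mul_inv, mul_inv]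
        ring
    _ = (4 * R)⁻¹ * (4 * π) ^ (-(n : ℝ) / 2) * d ^ 2 * s ^ (-μ)
          * (s ^ (-a) * Real.exp (-d ^ 2 / (4 * s))) := by
        rw [hspow]
        ring
    _ ≤ (4 * R)⁻¹ * (4 * π) ^ (-(n : ℝ) / 2) * d ^ 2 * s ^ (-μ)
          * ((4 * a) ^ a * d ^ (-(2 * a))) := by
        gcongr ?_ * ?_
        exact rpow_neg_mul_exp_le ha hd hs
    _ = (4 * R)⁻¹ * (4 * π) ^ (-(n : ℝ) / 2) * s ^ (-μ) * (4 * a) ^ a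
          * (d ^ 2 * d ^ (-(2 * a))) := by ring
    _ = (4 * R)⁻¹ * (4 * π) ^ (-(n : ℝ) / 2) * s ^ (-μ) * (4 * a) ^ a
          * (d ^ (1 - σ) * d ^ (-((n : ℝ) + 1 - 2 * μ - σ))) := by rw [hdpow]
    _ ≤ (4 * R)⁻¹ * (4 * π) ^ (-(n : ℝ) / 2) * s ^ (-μ) * (4 * a) ^ a
          * ((2 * R) ^ (1 - σ) * d ^ (-((n : ℝ) + 1 - 2 * μ - σ))) := by gcongr
    _ = (4 * R)⁻¹ * (4 * π) ^ (-(n : ℝ) / 2) * (4 * a) ^ a * (2 * R) ^ (1 - σ)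
          * s ^ (-μ) * d ^ (-((n : ℝ) + 1 - 2 * μ - σ)) := by ring
end
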